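/- Let m ≥ 3, ω^m = 1, and 1 < p < 2^{1/4m} with p^{2m} different from the second Pisot number. Then every interior point of (p^m − 1)·J_q, where q = pω, has a universal expansion in base q: a {0,1}-sequence (d_i) with ∑ d_i q^{-i} = z that contains every finite {0,1}-block as a consecutive subblock. -/

import Mathlib

def IsExpansionC (q z : ℂ) (c : ℕ → ℕ) : Prop :=
  (∀ k, c k ≤ 1) ∧ HasSum (fun k : ℕ => (c (k + 1) : ℂ) / q ^ (k + 1)) z

def JC (q : ℂ) : Set ℂ := {z | ∃ c, IsExpansionC q z c}

/-- A {0,1}-sequence (indexed from 1) is universal if it contains every finite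
{0,1}-block as a consecutive subblock. -/
def Universal (d : ℕ → ℕ) : Prop :=
  ∀ w : List ℕ, (∀ b ∈ w, b ≤ 1) →
    ∃ n : ℕ, ∀ i < w.length, d (n + 1 + i) = w.getD i 0

/-!
Put `b = q ^ m`, a real number with `1 < b` and `b ^ 4 < 2`. Grouping the positions of an expansion
by their residue modulo `m` splits it into `m` expansions in the real base `b`, so `(b - 1) J_q` is
contained in the parallelotope `∑ q ^ (m - 1 - j) [0, 1]`, and its interior in the open one.

Starting from a remainder in the open parallelotope, choose digits that steer every coordinate into
a prescribed short window, so that after a prescribed word has been emitted the remainder is again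
in the open parallelotope. Iterating over all words yields a universal expansion. Steering is
possible because the gaps between consecutive sums of distinct powers of `b` tend to zero: small
gaps are obtained by adding up small differences of sums that avoid the exponents `≡ 3 (mod 4)`,
and then using those exponents for a greedy expansion.

Small differences exist because `b` is not a Pisot unit. Indeed, were the differences bounded away
from zero, a window containing as many sums as possible would show that, up to scaling, the
differences below `3 / 2` take finitely many values. One consequence is that `b` is an algebraic
unit. Another is that, for a conjugate `α` of `b` with `1 ≤ ‖α‖`, the map sending a sum in `b` to
the same sum in `α` is almost additive, hence close to a linear map by the stability theorem of
Hyers. This forces `α = b`, so that `b` is a Pisot unit. But then the trace of `b - b⁻¹` is an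
integer in `(-1, 1)`, which makes all other conjugates of `b` positive, and the norm of `b - 1` is
an integer in `(-1, 1)` although `b ≠ 1`.
-/

section PowerSums

variable {R : Type*}

/-- The sum `∑_{i ∈ S} x^i` of the powers of `x` with exponents in `S`. A `{0,1}`-polynomial
evaluated at `x` is encoded by the set `S` of exponents that carry the digit `1`. -/
def powSum [Semiring R] (x : R) (S : Finset ℕ) : R := ∑ i ∈ S, x ^ i

@[simp]
lemma powSum_empty [Semiring R] (x : R) : powSum x ∅ = 0 := Finset.sum_empty

lemma powSum_union [Semiring R] (x : R) {S T : Finset ℕ} (h : Disjoint S T) :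
    powSum x (S ∪ T) = powSum x S + powSum x T := Finset.sum_union h

lemma powSum_map_add [CommSemiring R] (x : R) (k : ℕ) (S : Finset ℕ) :
    powSum x (S.map (addRightEmbedding k)) = x ^ k * powSum x S := by
  simp [powSum, Finset.sum_mul, pow_add, mul_comm]

lemma powSum_union_map_add [CommSemiring R] (x : R) {k : ℕ} {S : Finset ℕ}
    (hS : S ⊆ Finset.range k) (T : Finset ℕ) :
    powSum x (S ∪ T.map (addRightEmbedding k)) = powSum x S + x ^ k * powSum x T := by
  rw [powSum_union, powSum_map_add]
  refine Finset.disjoint_left.2 fun i hi hi' => ?_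
  obtain ⟨a, -, rfl⟩ := Finset.mem_map.1 hi'
  exact absurd (Finset.mem_range.1 (hS hi)) (by simp)

@[simp]
lemma map_powSum {R' F : Type*} [Semiring R] [Semiring R'] [FunLike F R R'] [RingHomClass F R R']
    (f : F) (x : R) (S : Finset ℕ) : f (powSum x S) = powSum (f x) S := by
  simp [powSum]

lemma norm_powSum_le [NormedRing R] [NormOneClass R] (x : R) {S T : Finset ℕ} (h : S ⊆ T) :
    ‖powSum x S‖ ≤ powSum ‖x‖ T :=
  calc ‖powSum x S‖ ≤ ∑ i ∈ S, ‖x‖ ^ i := norm_sum_le_of_le _ fun i _ => norm_pow_le x i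
    _ ≤ powSum ‖x‖ T := Finset.sum_le_sum_of_subset_of_nonneg h fun i _ _ => by positivity

variable {b : ℝ}

lemma powSum_nonneg (hb : 0 ≤ b) (S : Finset ℕ) : 0 ≤ powSum b S :=
  Finset.sum_nonneg fun i _ => pow_nonneg hb i

lemma powSum_mono (hb : 0 ≤ b) {S T : Finset ℕ} (h : S ⊆ T) : powSum b S ≤ powSum b T :=
  Finset.sum_le_sum_of_subset_of_nonneg h fun i _ _ => pow_nonneg hb i

lemma exists_sub_powSum_mem_Ico (hb : 0 < b) (hb2 : b ≤ 2) (n : ℕ) {t : ℝ}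
    (ht : t ∈ Set.Ico 0 (b ^ n)) :
    ∃ S ⊆ Finset.range n, t - powSum b S ∈ Set.Ico 0 1 := by
  induction n generalizing t with
  | zero => exact ⟨∅, by simp, by simpa using ht⟩
  | succ n ih =>
    have hmono : Finset.range n ⊆ Finset.range (n + 1) := Finset.range_mono n.le_succ
    obtain hlt | hge := lt_or_ge t (b ^ n)
    · obtain ⟨S, hS, hSt⟩ := ih ⟨ht.1, hlt⟩
      exact ⟨S, hS.trans hmono, hSt⟩
    · have hbn : 0 < b ^ n := pow_pos hb n
      have htop : t < b ^ n * b := by simpa [pow_succ] using ht.2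
      obtain ⟨S, hS, hSt⟩ := ih (t := t - b ^ n) ⟨by linarith, by nlinarith⟩
      have hn : n ∉ S := fun h => by simpa using hS h
      refine ⟨insert n S, Finset.insert_subset (by simp) (hS.trans hmono), ?_⟩
      rwa [powSum, Finset.sum_insert hn, ← sub_sub]

lemma exists_mod_eq_sub_powSum_mem_Ico (hb : 1 < b) {k : ℕ} (hbk : b ^ k ≤ 2) {j : ℕ}
    (hj : j < k) {t : ℝ} (ht : 0 ≤ t) :
    ∃ S : Finset ℕ, (∀ i ∈ S, i % k = j) ∧ t - powSum b S ∈ Set.Ico 0 (b ^ j) := by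
  have hbj : 0 < b ^ j := by positivity
  obtain ⟨n, hn⟩ := pow_unbounded_of_one_lt (t / b ^ j) (one_lt_pow₀ hb (by lia : k ≠ 0))
  obtain ⟨T, -, hT⟩ := exists_sub_powSum_mem_Ico (by positivity) hbk n ⟨by positivity, hn⟩
  have hinj : Set.InjOn (fun i => k * i + j) T := fun i _ i' _ h => by
    simpa [(show k ≠ 0 by lia)] using h
  have hsum : powSum b (T.image fun i => k * i + j) = b ^ j * powSum (b ^ k) T := by
    simp [powSum, Finset.sum_image hinj, Finset.sum_mul, pow_add, pow_mul, mul_comm]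
  have hscale : t - b ^ j * powSum (b ^ k) T = b ^ j * (t / b ^ j - powSum (b ^ k) T) := by
    field_simp
  refine ⟨T.image fun i => k * i + j, ?_, ?_⟩
  · simpa using fun i _ => Nat.mod_eq_of_lt hj
  · rw [hsum, hscale]
    exact ⟨mul_nonneg hbj.le hT.1, mul_lt_of_lt_one_right hbj hT.2⟩

end PowerSums

section Admissible

/-- A set of exponents is admissible if it avoids the residue class `3` modulo `4`. The reserved
class leaves room to add a greedy expansion to any admissible power sum. -/
def Admissible (S : Finset ℕ) : Prop := ∀ i ∈ S, i % 4 ≠ 3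

/-- The largest admissible set of exponents below `4 * n`. -/
def admissibleBelow (n : ℕ) : Finset ℕ := {i ∈ Finset.range (4 * n) | i % 4 ≠ 3}

lemma mem_admissibleBelow {n i : ℕ} : i ∈ admissibleBelow n ↔ i < 4 * n ∧ i % 4 ≠ 3 := by
  simp [admissibleBelow]

lemma admissibleBelow_subset_range (n : ℕ) : admissibleBelow n ⊆ Finset.range (4 * n) :=
  Finset.filter_subset _ _

lemma admissibleBelow_mono : Monotone admissibleBelow := fun _ _ h _ hi =>
  mem_admissibleBelow.2 ⟨by have := (mem_admissibleBelow.1 hi).1; lia, (mem_admissibleBelow.1 hi).2⟩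

lemma Admissible.of_subset_admissibleBelow {n : ℕ} {S : Finset ℕ} (h : S ⊆ admissibleBelow n) :
    Admissible S := fun _ hi => (mem_admissibleBelow.1 (h hi)).2

lemma Admissible.union {S T : Finset ℕ} (hS : Admissible S) (hT : Admissible T) :
    Admissible (S ∪ T) := fun i hi => (Finset.mem_union.1 hi).elim (hS i) (hT i)

lemma Admissible.exists_subset_admissibleBelow {S : Finset ℕ} (hS : Admissible S) :
    ∃ n, S ⊆ admissibleBelow n :=
  ⟨S.sup id + 1, fun i hi => mem_admissibleBelow.2
    ⟨by have : i ≤ S.sup id := Finset.le_sup (f := id) hi; lia, hS i hi⟩⟩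

lemma union_map_add_subset_admissibleBelow {k n : ℕ} {S T : Finset ℕ}
    (hS : S ⊆ admissibleBelow k) (hT : T ⊆ admissibleBelow n) :
    S ∪ T.map (addRightEmbedding (4 * k)) ⊆ admissibleBelow (k + n) := by
  refine Finset.union_subset (hS.trans (admissibleBelow_mono (by lia))) fun i hi => ?_
  obtain ⟨a, ha, rfl⟩ := Finset.mem_map.1 hi
  have := mem_admissibleBelow.1 (hT ha)
  exact mem_admissibleBelow.2 ⟨by rw [addRightEmbedding_apply]; lia, by simpa using this.2⟩

lemma powSum_union_map_add_of_admissibleBelow {R : Type*} [CommSemiring R] (x : R) {k : ℕ}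
    {S : Finset ℕ} (hS : S ⊆ admissibleBelow k) (T : Finset ℕ) :
    powSum x (S ∪ T.map (addRightEmbedding (4 * k))) = powSum x S + (x ^ 4) ^ k * powSum x T := by
  rw [powSum_union_map_add x (hS.trans (admissibleBelow_subset_range k)), pow_mul]

lemma admissibleBelow_one : admissibleBelow 1 = {0, 1, 2} := by decide

lemma powSum_admissibleBelow_one {R : Type*} [Semiring R] (x : R) :
    powSum x (admissibleBelow 1) = 1 + x + x ^ 2 := by
  simp [admissibleBelow_one, powSum, add_assoc]

lemma admissibleBelow_succ (n : ℕ) : admissibleBelow (n + 1) =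
    admissibleBelow n ∪ (admissibleBelow 1).map (addRightEmbedding (4 * n)) := by
  ext i
  simp only [Finset.mem_union, mem_admissibleBelow, admissibleBelow_one, Finset.mem_map,
    Finset.mem_insert, Finset.mem_singleton, exists_eq_or_imp, exists_eq_left,
    addRightEmbedding_apply]
  lia

/-- The infinite sum of `b^{-i}` over the `i ≥ 1` with `i % 4 ≠ 1`. For `1 < b` and `b ^ 4 < 2`
every window `(t - windowLength b, t)` with `0 < t` contains an admissible power sum. -/
noncomputable def windowLength (b : ℝ) : ℝ := (1 + b + b ^ 2) / (b ^ 4 - 1)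

variable {b : ℝ}

lemma one_lt_pow_four (hb : 1 < b) : 1 < b ^ 4 := one_lt_pow₀ hb (by simp)

lemma windowLength_mul (hb : 1 < b) : windowLength b * (b ^ 4 - 1) = 1 + b + b ^ 2 :=
  div_mul_cancel₀ _ (sub_pos.2 (one_lt_pow_four hb)).ne'

lemma lt_windowLength (hb : 1 < b) (hb4 : b ^ 4 < 2) : 1 + b + b ^ 2 < windowLength b :=
  (lt_div_iff₀ (sub_pos.2 (one_lt_pow_four hb))).2 (by nlinarith [sq_nonneg b])

lemma three_lt_windowLength (hb : 1 < b) (hb4 : b ^ 4 < 2) : 3 < windowLength b := by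
  nlinarith [lt_windowLength hb hb4]

lemma powSum_admissibleBelow (hb : 1 < b) (n : ℕ) :
    powSum b (admissibleBelow n) = windowLength b * ((b ^ 4) ^ n - 1) := by
  induction n with
  | zero => simp [admissibleBelow]
  | succ n ih =>
    rw [admissibleBelow_succ, powSum_union_map_add_of_admissibleBelow b subset_rfl, ih,
      powSum_admissibleBelow_one, ← windowLength_mul hb]
    ring

lemma exists_subset_admissibleBelow_sub_powSum_mem_Ioo (hb : 1 < b) (hb4 : b ^ 4 < 2) (n : ℕ)
    {t : ℝ} (ht : t ∈ Set.Ioo 0 ((b ^ 4) ^ n * windowLength b)) :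
    ∃ S ⊆ admissibleBelow n, t - powSum b S ∈ Set.Ioo 0 (windowLength b) := by
  induction n generalizing t with
  | zero => exact ⟨∅, by simp, by simpa using ht⟩
  | succ n ih =>
    obtain hlt | hge := lt_or_ge t ((b ^ 4) ^ n * windowLength b)
    · obtain ⟨S, hS, hSt⟩ := ih ⟨ht.1, hlt⟩
      exact ⟨S, hS.trans (admissibleBelow_mono n.le_succ), hSt⟩
    · have hbn : 0 < (b ^ 4) ^ n := by positivity
      have hlow : (b ^ 4) ^ n * (1 + b + b ^ 2) < (b ^ 4) ^ n * windowLength b :=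
        mul_lt_mul_of_pos_left (lt_windowLength hb hb4) hbn
      have hhigh : (b ^ 4) ^ (n + 1) * windowLength b
          = (b ^ 4) ^ n * windowLength b + (b ^ 4) ^ n * (1 + b + b ^ 2) := by
        rw [← windowLength_mul hb]; ring
      obtain ⟨S, hS, hSt⟩ := ih (t := t - (b ^ 4) ^ n * (1 + b + b ^ 2))
        ⟨by linarith, by linarith [ht.2]⟩
      refine ⟨_, union_map_add_subset_admissibleBelow hS subset_rfl, ?_⟩
      rwa [powSum_union_map_add_of_admissibleBelow b hS, powSum_admissibleBelow_one, add_comm,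
        ← sub_sub]

end Admissible

section WindowCounting

lemma card_le_of_separated {s : Finset ℝ} {l C t : ℝ} (hl : 0 < l)
    (hwindow : ∀ y ∈ s, t - y ∈ Set.Ioo 0 C)
    (hsep : (s : Set ℝ).Pairwise fun y y' => l ≤ |y - y'|) :
    s.card ≤ ⌊C / l⌋₊ + 1 := by
  have hmaps : Set.MapsTo (fun y => ⌊(t - y) / l⌋₊) s (Finset.range (⌊C / l⌋₊ + 1)) := by
    intro y hy
    have hle : (t - y) / l ≤ C / l := by gcongr; exact (hwindow y hy).2.le
    simpa [Nat.lt_succ_iff] using Nat.floor_le_floor hle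
  have hinj : Set.InjOn (fun y => ⌊(t - y) / l⌋₊) s := by
    intro y hy y' hy' hfloor
    by_contra hne
    have hlt : |(t - y) / l - (t - y') / l| < 1 := by
      have hy0 : 0 ≤ (t - y) / l := div_nonneg (hwindow y hy).1.le hl.le
      have hy0' : 0 ≤ (t - y') / l := div_nonneg (hwindow y' hy').1.le hl.le
      apply Int.abs_sub_lt_one_of_floor_eq_floor
      rw [← Int.natCast_floor_eq_floor hy0, ← Int.natCast_floor_eq_floor hy0']
      exact congrArg Nat.cast hfloor
    rw [← sub_div, sub_sub_sub_cancel_left, abs_div, abs_of_pos hl, div_lt_one hl,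
      abs_sub_comm] at hlt
    exact hlt.not_ge (hsep hy hy' hne)
  simpa using Finset.card_le_card_of_injOn _ hmaps hinj

/-- Distinct admissible power sums of `b` are at distance at least `l`. -/
def AdmissibleSumsSeparated (b l : ℝ) : Prop :=
  (powSum b '' {S | Admissible S}).Pairwise fun y y' => l ≤ |y - y'|

open Classical in
/-- The values of admissible power sums with exponents below `4 * n` in the window
`(t - windowLength b, t)`. -/
noncomputable def windowSums (b : ℝ) (n : ℕ) (t : ℝ) : Finset ℝ :=
  {y ∈ (admissibleBelow n).powerset.image (powSum b) | t - y ∈ Set.Ioo 0 (windowLength b)}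

/-- Up to the factor `(b ^ 4) ^ k`, every difference of absolute value less than `3 / 2` of two
admissible power sums is a difference of two power sums from the finite set of those with exponents
below `4 * k`. -/
def SmallDifferencesReduce (b : ℝ) (k : ℕ) : Prop :=
  ∀ S S', Admissible S → Admissible S' → |powSum b S' - powSum b S| < 3 / 2 →
    ∃ Q ⊆ admissibleBelow k, ∃ R ⊆ admissibleBelow k,
      (b ^ 4) ^ k * (powSum b S' - powSum b S) = powSum b Q - powSum b R

variable {b l t τ : ℝ} {n k : ℕ}

lemma mem_windowSums {y : ℝ} : y ∈ windowSums b n t ↔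
    (∃ S ⊆ admissibleBelow n, powSum b S = y) ∧ t - y ∈ Set.Ioo 0 (windowLength b) := by
  simp [windowSums]

lemma AdmissibleSumsSeparated.card_windowSums_le (h : AdmissibleSumsSeparated b l) (hl : 0 < l) :
    (windowSums b n t).card ≤ ⌊windowLength b / l⌋₊ + 1 := by
  refine card_le_of_separated hl (fun y hy => (mem_windowSums.1 hy).2) (h.mono fun y hy => ?_)
  obtain ⟨S, hS, rfl⟩ := (mem_windowSums.1 hy).1
  exact ⟨S, .of_subset_admissibleBelow hS, rfl⟩

lemma AdmissibleSumsSeparated.exists_max_card_windowSums (h : AdmissibleSumsSeparated b l)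
    (hl : 0 < l) (hb : 1 < b) (hb4 : b ^ 4 < 2) :
    ∃ k, ∃ τ ∈ Set.Ioo 0 ((b ^ 4) ^ k * windowLength b),
      ∀ n, ∀ t ∈ Set.Ioo 0 ((b ^ 4) ^ n * windowLength b),
        (windowSums b n t).card ≤ (windowSums b k τ).card := by
  let cards : Set ℕ := {c | ∃ n, ∃ t ∈ Set.Ioo 0 ((b ^ 4) ^ n * windowLength b),
    (windowSums b n t).card = c}
  have hbdd : BddAbove cards :=
    ⟨_, by rintro _ ⟨n, t, -, rfl⟩; exact h.card_windowSums_le hl⟩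
  have hnonempty : cards.Nonempty :=
    ⟨_, 0, 1, ⟨one_pos, by linarith [three_lt_windowLength hb hb4]⟩, rfl⟩
  obtain ⟨k, τ, hτ, hk⟩ := Nat.sSup_mem hnonempty hbdd
  exact ⟨k, τ, hτ, fun n t ht => hk ▸ le_csSup hbdd ⟨n, t, ht, rfl⟩⟩

/- A maximal window stays maximal after rescaling and translation, so it contains the translates of
the sums in the original window and nothing else. -/
lemma windowSums_eq_image_of_max (hb : 1 < b)
    (hτ : τ ∈ Set.Ioo 0 ((b ^ 4) ^ k * windowLength b))
    (hmax : ∀ n, ∀ t ∈ Set.Ioo 0 ((b ^ 4) ^ n * windowLength b),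
      (windowSums b n t).card ≤ (windowSums b k τ).card)
    {S : Finset ℕ} (hS : S ⊆ admissibleBelow n) :
    windowSums b (k + n) (τ + (b ^ 4) ^ k * powSum b S) =
      (windowSums b k τ).image (· + (b ^ 4) ^ k * powSum b S) := by
  have hbk : 0 < (b ^ 4) ^ k := by positivity
  have hS0 : 0 ≤ powSum b S := powSum_nonneg (by linarith) S
  have hSle : powSum b S ≤ windowLength b * ((b ^ 4) ^ n - 1) :=
    powSum_admissibleBelow hb n ▸ powSum_mono (by linarith) hS
  have hmem : τ + (b ^ 4) ^ k * powSum b S ∈ Set.Ioo 0 ((b ^ 4) ^ (k + n) * windowLength b) := by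
    refine ⟨add_pos_of_pos_of_nonneg hτ.1 (by positivity), ?_⟩
    have := mul_le_mul_of_nonneg_left hSle hbk.le
    rw [pow_add]
    linarith [hτ.2]
  refine (Finset.eq_of_subset_of_card_le ?_ ?_).symm
  · intro y hy
    obtain ⟨x, hx, rfl⟩ := Finset.mem_image.1 hy
    obtain ⟨⟨Q, hQ, rfl⟩, hwindow⟩ := mem_windowSums.1 hx
    refine mem_windowSums.2 ⟨⟨_, union_map_add_subset_admissibleBelow hQ hS,
      powSum_union_map_add_of_admissibleBelow b hQ S⟩, ?_⟩
    rwa [add_sub_add_right_eq_sub]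
  · rw [Finset.card_image_of_injective _ (add_left_injective _)]
    exact hmax _ _ hmem

lemma exists_mul_sub_eq_of_max (hb : 1 < b) (hb4 : b ^ 4 < 2)
    (hτ : τ ∈ Set.Ioo 0 ((b ^ 4) ^ k * windowLength b))
    (hmax : ∀ n, ∀ t ∈ Set.Ioo 0 ((b ^ 4) ^ n * windowLength b),
      (windowSums b n t).card ≤ (windowSums b k τ).card)
    {S S' : Finset ℕ} (hS : Admissible S) (hS' : Admissible S')
    (hdiff : τ - (b ^ 4) ^ k * (powSum b S' - powSum b S) ∈
      Set.Ioo 0 ((b ^ 4) ^ k * windowLength b)) :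
    ∃ Q ⊆ admissibleBelow k, ∃ R ⊆ admissibleBelow k,
      (b ^ 4) ^ k * (powSum b S' - powSum b S) = powSum b Q - powSum b R := by
  obtain ⟨n, hn⟩ := (hS.union hS').exists_subset_admissibleBelow
  obtain ⟨hSn, hSn'⟩ := Finset.union_subset_iff.1 hn
  obtain ⟨R, hR, hwindow⟩ := exists_subset_admissibleBelow_sub_powSum_mem_Ioo hb hb4 k hdiff
  have hmem : powSum b R + (b ^ 4) ^ k * powSum b S' ∈
      windowSums b (k + n) (τ + (b ^ 4) ^ k * powSum b S) :=
    mem_windowSums.2 ⟨⟨_, union_map_add_subset_admissibleBelow hR hSn',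
      powSum_union_map_add_of_admissibleBelow b hR S'⟩, by convert hwindow using 1; ring⟩
  rw [windowSums_eq_image_of_max hb hτ hmax hSn] at hmem
  obtain ⟨_, hy, hyR⟩ := Finset.mem_image.1 hmem
  obtain ⟨⟨Q, hQ, rfl⟩, -⟩ := mem_windowSums.1 hy
  exact ⟨Q, hQ, R, hR, by linarith⟩

theorem AdmissibleSumsSeparated.exists_smallDifferencesReduce (h : AdmissibleSumsSeparated b l)
    (hl : 0 < l) (hb : 1 < b) (hb4 : b ^ 4 < 2) : ∃ k, SmallDifferencesReduce b k := by
  obtain ⟨k, τ, hτ, hmax⟩ := h.exists_max_card_windowSums hl hb hb4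
  refine ⟨k, fun S S' hS hS' hsmall => ?_⟩
  have hbk : 0 < (b ^ 4) ^ k := by positivity
  set u := (b ^ 4) ^ k * (powSum b S' - powSum b S) with hu
  have hhalf : |u| < (b ^ 4) ^ k * windowLength b / 2 := by
    rw [hu, abs_mul, abs_of_pos hbk]
    nlinarith [three_lt_windowLength hb hb4]
  -- As `|u|` is less than half the window length, `τ - u` or `τ + u` lies in the window.
  have hcases : τ - u ∈ Set.Ioo 0 ((b ^ 4) ^ k * windowLength b) ∨
      τ - -u ∈ Set.Ioo 0 ((b ^ 4) ^ k * windowLength b) := by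
    obtain ⟨_, _⟩ := hτ
    obtain ⟨_, _⟩ := abs_lt.1 hhalf
    obtain hlow | hhigh := lt_or_ge τ ((b ^ 4) ^ k * windowLength b / 2) <;>
      obtain hneg | hpos := lt_or_ge u 0
    · exact .inl ⟨by linarith, by linarith⟩
    · exact .inr ⟨by linarith, by linarith⟩
    · exact .inr ⟨by linarith, by linarith⟩
    · exact .inl ⟨by linarith, by linarith⟩
  obtain hmem | hmem := hcases
  · exact exists_mul_sub_eq_of_max hb hb4 hτ hmax hS hS' hmem
  · rw [hu, ← mul_neg, neg_sub] at hmem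
    obtain ⟨Q, hQ, R, hR, hQR⟩ := exists_mul_sub_eq_of_max hb hb4 hτ hmax hS' hS hmem
    exact ⟨R, hR, Q, hQ, by rw [hu]; linarith⟩

end WindowCounting

section HyersStability

open Filter Topology

variable {G E : Type*} [AddCommMonoid G] [NormedAddCommGroup E] [NormedSpace ℝ E]
  {f : G → E} {M : ℝ}

lemma dist_two_pow_smul_le (hf : ∀ x y, ‖f (x + y) - f x - f y‖ ≤ M) (x : G) (k : ℕ) :
    dist ((2 ^ k : ℝ)⁻¹ • f (2 ^ k • x)) ((2 ^ (k + 1) : ℝ)⁻¹ • f (2 ^ (k + 1) • x)) ≤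
      M / 2 / 2 ^ k := by
  set y := 2 ^ k • x
  have hy : 2 ^ (k + 1) • x = y + y := by rw [pow_succ', mul_smul, two_nsmul]
  have hsplit : (2 ^ (k + 1) : ℝ)⁻¹ • f (y + y) - (2 ^ k : ℝ)⁻¹ • f y =
      (2 ^ (k + 1) : ℝ)⁻¹ • (f (y + y) - f y - f y) := by
    rw [pow_succ]
    module
  rw [hy, dist_comm, dist_eq_norm, hsplit, norm_smul, norm_inv, norm_pow, Real.norm_ofNat]
  calc (2 ^ (k + 1) : ℝ)⁻¹ * ‖f (y + y) - f y - f y‖ ≤ (2 ^ (k + 1) : ℝ)⁻¹ * M := by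
        gcongr; exact hf y y
    _ = M / 2 / 2 ^ k := by rw [pow_succ]; field_simp

lemma norm_two_pow_smul_add_sub_le (hf : ∀ x y, ‖f (x + y) - f x - f y‖ ≤ M) (x y : G) (k : ℕ) :
    ‖(2 ^ k : ℝ)⁻¹ • f (2 ^ k • (x + y)) - (2 ^ k : ℝ)⁻¹ • f (2 ^ k • x) -
      (2 ^ k : ℝ)⁻¹ • f (2 ^ k • y)‖ ≤ (2 ^ k : ℝ)⁻¹ * M := by
  rw [smul_add, ← smul_sub, ← smul_sub, norm_smul, norm_inv, norm_pow, Real.norm_ofNat]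
  gcongr
  exact hf _ _

theorem exists_addMonoidHom_norm_sub_le [CompleteSpace E]
    (hf : ∀ x y, ‖f (x + y) - f x - f y‖ ≤ M) :
    ∃ A : G →+ E, ∀ x, ‖f x - A x‖ ≤ M := by
  have hstep := dist_two_pow_smul_le hf
  choose A hA using fun x => cauchySeq_tendsto_of_complete (cauchySeq_of_le_geometric_two (hstep x))
  have hadd (x y : G) : A (x + y) = A x + A y := by
    have hdefect := ((hA (x + y)).sub (hA x)).sub (hA y)
    have hzero : Tendsto (fun k : ℕ => (2 ^ k : ℝ)⁻¹ * M) atTop (𝓝 0) := by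
      simpa using (tendsto_pow_atTop_nhds_zero_of_lt_one (r := (2 : ℝ)⁻¹) (by norm_num)
        (by norm_num)).mul_const M
    have hlim := tendsto_nhds_unique hdefect
      (squeeze_zero_norm (norm_two_pow_smul_add_sub_le hf x y) hzero)
    rwa [sub_sub, sub_eq_zero] at hlim
  refine ⟨AddMonoidHom.mk' A hadd, fun x => ?_⟩
  simpa [dist_eq_norm] using dist_le_of_le_geometric_two_of_tendsto₀ (hstep x) (hA x)

end HyersStability

section SubsetSums

variable {ι : Type*} {M : ℝ}

lemma summable_of_abs_sum_le {f : ι → ℝ} (h : ∀ s : Finset ι, |∑ i ∈ s, f i| ≤ M) :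
    Summable f := by
  refine .of_abs (summable_of_sum_le (fun _ => abs_nonneg _) (c := 2 * M) fun s => ?_)
  have hpos : ∑ i ∈ s with 0 ≤ f i, |f i| = ∑ i ∈ s with 0 ≤ f i, f i :=
    Finset.sum_congr rfl fun i hi => abs_of_nonneg (Finset.mem_filter.1 hi).2
  have hneg : ∑ i ∈ s with ¬0 ≤ f i, |f i| = -∑ i ∈ s with ¬0 ≤ f i, f i := by
    rw [← Finset.sum_neg_distrib]
    exact Finset.sum_congr rfl fun i hi => abs_of_neg (not_le.1 (Finset.mem_filter.1 hi).2)
  rw [← Finset.sum_filter_add_sum_filter_not s (0 ≤ f ·), hpos, hneg, two_mul]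
  exact add_le_add ((le_abs_self _).trans (h _)) ((neg_le_abs _).trans (h _))

lemma summable_of_norm_sum_le {f : ι → ℂ} (h : ∀ s : Finset ι, ‖∑ i ∈ s, f i‖ ≤ M) :
    Summable f := by
  have hre : Summable fun i => (f i).re := summable_of_abs_sum_le fun s => by
    simpa using (Complex.abs_re_le_norm _).trans (h s)
  have him : Summable fun i => (f i).im := summable_of_abs_sum_le fun s => by
    simpa using (Complex.abs_im_le_norm _).trans (h s)
  exact ⟨⟨_, _⟩, (Complex.hasSum_iff _ _).2 ⟨hre.hasSum, him.hasSum⟩⟩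

end SubsetSums

section Conjugates

open Polynomial

lemma aeval_eq_zero_of_isConjRoot {K A : Type*} [Field K] [Ring A] [Algebra K A] {x y : A}
    (h : IsConjRoot K x y) {P : K[X]} (hP : aeval x P = 0) : aeval y P = 0 := by
  obtain ⟨Q, rfl⟩ : minpoly K y ∣ P := (show minpoly K x = minpoly K y from h) ▸ minpoly.dvd K x hP
  simp

variable {b M : ℝ} {α c : ℂ} {k : ℕ}

lemma pow_mul_sub_eq_of_isConjRoot (hα : IsConjRoot ℚ (b : ℂ) α) {S S' Q R : Finset ℕ}
    (h : (b ^ 4) ^ k * (powSum b S' - powSum b S) = powSum b Q - powSum b R) :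
    (α ^ 4) ^ k * (powSum α S' - powSum α S) = powSum α Q - powSum α R := by
  have hb : aeval (b : ℂ) (((X : ℚ[X]) ^ 4) ^ k * (powSum X S' - powSum X S) -
      (powSum X Q - powSum X R)) = 0 := by
    have hcast := congrArg Complex.ofRealHom h
    simp only [map_sub, map_mul, map_pow, map_powSum, Complex.ofRealHom_eq_coe] at hcast
    simp only [map_sub, map_mul, map_pow, map_powSum, aeval_X, hcast, sub_self]
  simpa [sub_eq_zero] using aeval_eq_zero_of_isConjRoot hα hb

lemma SmallDifferencesReduce.exists_norm_powSum_sub_le (h : SmallDifferencesReduce b k)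
    (hα : IsConjRoot ℚ (b : ℂ) α) (hα1 : 1 ≤ ‖α‖) :
    ∃ M, ∀ S S', Admissible S → Admissible S' → |powSum b S' - powSum b S| < 3 / 2 →
      ‖powSum α S' - powSum α S‖ ≤ M := by
  refine ⟨2 * powSum ‖α‖ (admissibleBelow k), fun S S' hS hS' hsmall => ?_⟩
  obtain ⟨Q, hQ, R, hR, hQR⟩ := h S S' hS hS' hsmall
  calc ‖powSum α S' - powSum α S‖
      ≤ (‖α‖ ^ 4) ^ k * ‖powSum α S' - powSum α S‖ :=
        le_mul_of_one_le_left (norm_nonneg _) (one_le_pow₀ (one_le_pow₀ hα1))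
    _ = ‖powSum α Q - powSum α R‖ := by
        rw [← pow_mul_sub_eq_of_isConjRoot hα hQR, norm_mul, norm_pow, norm_pow]
    _ ≤ 2 * powSum ‖α‖ (admissibleBelow k) := by
        linarith [norm_sub_le (powSum α Q) (powSum α R), norm_powSum_le α hQ, norm_powSum_le α hR]

/- Two sums that are far apart are joined by a chain of admissible sums whose consecutive members
are close. -/
lemma norm_powSum_sub_le_mul (hb : 1 < b) (hb4 : b ^ 4 < 2)
    (hM : ∀ S S', Admissible S → Admissible S' → |powSum b S' - powSum b S| < 3 / 2 →
      ‖powSum α S' - powSum α S‖ ≤ M) (n : ℕ) {S S' : Finset ℕ} (hS : Admissible S)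
    (hS' : Admissible S') (hdist : |powSum b S' - powSum b S| ≤ n / 2) :
    ‖powSum α S' - powSum α S‖ ≤ (n + 1) * M := by
  wlog hle : powSum b S ≤ powSum b S' generalizing S S'
  · rw [norm_sub_rev]
    exact this hS' hS (abs_sub_comm (powSum b S) _ ▸ hdist) (le_of_not_ge hle)
  rw [abs_of_nonneg (sub_nonneg.2 hle)] at hdist
  have hM0 : 0 ≤ M := (norm_nonneg _).trans (hM S S hS hS (by simp))
  induction n generalizing S' with
  | zero =>
    have hzero : powSum b S' - powSum b S = 0 := by push_cast at hdist; linarith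
    simpa using hM S S' hS hS' (by rw [hzero]; norm_num)
  | succ n ih =>
    push_cast at hdist ⊢
    obtain hclose | hfar := lt_or_ge (powSum b S' - powSum b S) (3 / 2)
    · have := hM S S' hS hS' (by rwa [abs_of_nonneg (sub_nonneg.2 hle)])
      nlinarith [mul_nonneg n.cast_nonneg hM0]
    · obtain ⟨U, hU, hU0, hU1⟩ := exists_mod_eq_sub_powSum_mem_Ico hb hb4.le (j := 0) (by simp)
        (t := powSum b S' - 1 / 2) (by linarith [powSum_nonneg (by linarith : 0 ≤ b) S])
      have hUadm : Admissible U := fun i hi => by simp [hU i hi]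
      rw [pow_zero] at hU1
      have hlast := hM U S' hUadm hS' (abs_lt.2 ⟨by linarith, by linarith⟩)
      have hfirst := ih hUadm (by linarith) (by linarith)
      linarith [norm_sub_le_norm_sub_add_norm_sub (powSum α S') (powSum α U) (powSum α S)]

lemma exists_mod_four_eq_sub_powSum_mem_Ico_two (hb : 1 < b) (hb4 : b ^ 4 < 2) {j : ℕ} (hj : j < 3)
    {t : ℝ} (ht : 0 ≤ t) :
    ∃ S : Finset ℕ, (∀ i ∈ S, i % 4 = j) ∧ t - powSum b S ∈ Set.Ico 0 2 := by
  obtain ⟨S, hS, hS0, hSj⟩ := exists_mod_eq_sub_powSum_mem_Ico hb hb4.le (by lia : j < 4) ht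
  refine ⟨S, hS, hS0, hSj.trans (hb4.trans_le' ?_)⟩
  exact pow_le_pow_right₀ hb.le (by lia)

/- The sum `a + n` is approximated by a sum with exponents in class `2`, and by the union of an
approximation of `a` in class `0` with one of `n` in class `1`. -/
lemma exists_norm_powSum_sub_mul_natCast_le (hb : 1 < b) (hb4 : b ^ 4 < 2)
    (hM : ∀ S S', Admissible S → Admissible S' → |powSum b S' - powSum b S| ≤ 5 →
      ‖powSum α S' - powSum α S‖ ≤ M) :
    ∃ c : ℂ, ∀ n : ℕ, ∃ S, Admissible S ∧ (n : ℝ) - powSum b S ∈ Set.Ico 0 2 ∧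
      ‖powSum α S - c * n‖ ≤ 3 * M := by
  choose F hFmod hF using fun (j : Fin 3) (n : ℕ) =>
    exists_mod_four_eq_sub_powSum_mem_Ico_two hb hb4 j.isLt n.cast_nonneg
  have hadm (j n) : Admissible (F j n) := fun i hi => by rw [hFmod j n i hi]; lia
  have hsame (i j n) : ‖powSum α (F i n) - powSum α (F j n)‖ ≤ M := by
    obtain ⟨_, _⟩ := hF i n
    obtain ⟨_, _⟩ := hF j n
    exact hM _ _ (hadm _ _) (hadm _ _) (abs_le.2 ⟨by linarith, by linarith⟩)
  have hsplit (a n : ℕ) :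
      ‖powSum α (F 2 (a + n)) - (powSum α (F 0 a) + powSum α (F 1 n))‖ ≤ M := by
    have hdisj : Disjoint (F 0 a) (F 1 n) := Finset.disjoint_left.2 fun i hi hi' => by
      simpa using (hFmod 0 a i hi).symm.trans (hFmod 1 n i hi')
    have hab := hF 2 (a + n)
    push_cast at hab
    obtain ⟨_, _⟩ := hab
    obtain ⟨_, _⟩ := hF 0 a
    obtain ⟨_, _⟩ := hF 1 n
    rw [← powSum_union α hdisj]
    refine hM _ _ ((hadm 0 a).union (hadm 1 n)) (hadm 2 (a + n)) ?_
    rw [powSum_union b hdisj]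
    exact abs_le.2 ⟨by linarith, by linarith⟩
  obtain ⟨A, hA⟩ := exists_addMonoidHom_norm_sub_le (f := fun n => powSum α (F 0 n)) (M := 3 * M)
    fun a n => calc
      _ = ‖(powSum α (F 2 (a + n)) - (powSum α (F 0 a) + powSum α (F 1 n))) +
          (powSum α (F 0 (a + n)) - powSum α (F 2 (a + n))) +
          (powSum α (F 1 n) - powSum α (F 0 n))‖ := by congr 1; ring
      _ ≤ 3 * M := by
        refine norm_add₃_le.trans ?_
        linarith [hsplit a n, hsame 0 2 (a + n), hsame 1 0 n]
  refine ⟨A 1, fun n => ⟨F 0 n, hadm 0 n, hF 0 n, ?_⟩⟩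
  have hAn : A n = A 1 * n := by simpa [mul_comm] using map_nsmul A n 1
  exact hAn ▸ hA n

lemma exists_norm_powSum_sub_mul_powSum_le (hb : 1 < b) (hb4 : b ^ 4 < 2)
    (hM : ∀ S S', Admissible S → Admissible S' → |powSum b S' - powSum b S| ≤ 5 →
      ‖powSum α S' - powSum α S‖ ≤ M) :
    ∃ (c : ℂ) (M' : ℝ), ∀ S, Admissible S → ‖powSum α S - c * powSum b S‖ ≤ M' := by
  obtain ⟨c, hc⟩ := exists_norm_powSum_sub_mul_natCast_le hb hb4 hM
  refine ⟨c, M + 3 * M + ‖c‖, fun S hS => ?_⟩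
  set n := ⌊powSum b S⌋₊
  have hn : (n : ℝ) ≤ powSum b S := Nat.floor_le (powSum_nonneg (by linarith) S)
  have hn' : powSum b S < n + 1 := Nat.lt_floor_add_one _
  obtain ⟨T, hT, ⟨hT0, hT2⟩, hTn⟩ := hc n
  have hST : ‖powSum α S - powSum α T‖ ≤ M := hM T S hT hS (abs_le.2 ⟨by linarith, by linarith⟩)
  have hfrac : ‖c * ((n - powSum b S : ℝ) : ℂ)‖ ≤ ‖c‖ := by
    rw [norm_mul, Complex.norm_real]
    exact mul_le_of_le_one_right (norm_nonneg c) (abs_le.2 ⟨by linarith, by linarith⟩)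
  calc ‖powSum α S - c * powSum b S‖
      = ‖(powSum α S - powSum α T) + (powSum α T - c * n) + c * ((n - powSum b S : ℝ) : ℂ)‖ := by
        congr 1; push_cast; ring
    _ ≤ M + 3 * M + ‖c‖ := norm_add₃_le.trans (by gcongr)

lemma eq_zero_of_norm_powSum_sub_mul_powSum_le (hb : 1 < b) (hαb : α ≠ b)
    (h : ∀ S, Admissible S → ‖powSum α S - c * powSum b S‖ ≤ M) : c = 0 := by
  have hsingle (i : ℕ) (hi : i % 4 ≠ 3) : ‖α ^ i - c * b ^ i‖ ≤ M := by
    simpa [powSum] using h {i} (by simpa [Admissible] using hi)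
  have hbound (n : ℕ) : ‖c * (α - b)‖ * (b ^ 4) ^ n ≤ ‖α‖ * M + M := by
    calc ‖c * (α - b)‖ * (b ^ 4) ^ n
        = ‖α * (α ^ (4 * n) - c * b ^ (4 * n)) - (α ^ (4 * n + 1) - c * b ^ (4 * n + 1))‖ := by
          rw [← Real.norm_of_nonneg (by positivity : 0 ≤ (b ^ 4) ^ n), ← Complex.norm_real,
            ← norm_mul, ← norm_neg]
          congr 1; push_cast; ring
      _ ≤ ‖α‖ * M + M := by
          refine (norm_sub_le _ _).trans ?_
          rw [norm_mul]
          gcongr <;> exact hsingle _ (by lia)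
  by_contra hc
  have hpos : 0 < ‖c * (α - b)‖ := norm_pos_iff.2 (mul_ne_zero hc (sub_ne_zero.2 hαb))
  obtain ⟨n, hn⟩ := pow_unbounded_of_one_lt ((‖α‖ * M + M) / ‖c * (α - b)‖) (one_lt_pow_four hb)
  rw [div_lt_iff₀' hpos] at hn
  exact hn.not_ge (hbound n)

lemma norm_lt_one_of_norm_powSum_le (h : ∀ S, Admissible S → ‖powSum α S‖ ≤ M) : ‖α‖ < 1 := by
  have hsummable : Summable fun n => (α ^ 4) ^ n := summable_of_norm_sum_le (M := M) fun s => by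
    have hadm : Admissible (s.image (4 * ·)) := by
      simp only [Admissible, Finset.forall_mem_image]
      lia
    simpa [powSum, Finset.sum_image, pow_mul] using h _ hadm
  rw [summable_geometric_iff_norm_lt_one, norm_pow] at hsummable
  exact (pow_lt_one_iff_of_nonneg (norm_nonneg α) (by simp)).1 hsummable

theorem SmallDifferencesReduce.norm_lt_one_of_isConjRoot (h : SmallDifferencesReduce b k)
    (hb : 1 < b) (hb4 : b ^ 4 < 2) (hα : IsConjRoot ℚ (b : ℂ) α) (hαb : α ≠ b) : ‖α‖ < 1 := by
  by_contra! hα1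
  obtain ⟨M, hM⟩ := h.exists_norm_powSum_sub_le hα hα1
  obtain ⟨c, M', hc⟩ := exists_norm_powSum_sub_mul_powSum_le hb hb4 fun S S' hS hS' hdist =>
    norm_powSum_sub_le_mul hb hb4 hM 10 hS hS' (by norm_num; exact hdist)
  obtain rfl := eq_zero_of_norm_powSum_sub_mul_powSum_le hb hαb hc
  exact hα1.not_gt (norm_lt_one_of_norm_powSum_le (by simpa using hc))

end Conjugates

section Integrality

open Polynomial

lemma isIntegral_of_abs_coeff_le_one {A : Type*} [CommRing A] {x : A} {P : ℤ[X]} (hP : P ≠ 0)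
    (hcoeff : ∀ i, |P.coeff i| ≤ 1) (hx : aeval x P = 0) : IsIntegral ℤ x := by
  have hlead : P.leadingCoeff = 1 ∨ P.leadingCoeff = -1 := by
    have := leadingCoeff_ne_zero.2 hP
    have := abs_le.1 (hcoeff P.natDegree)
    rw [coeff_natDegree] at this
    lia
  obtain hone | hneg := hlead
  · exact ⟨P, hone, hx⟩
  · exact ⟨-P, by simp [Monic, hneg], by rw [← aeval_def, map_neg, hx, neg_zero]⟩

lemma isIntegral_inv_of_abs_coeff_le_one {K : Type*} [Field K] {x : K} (hx0 : x ≠ 0) {P : ℤ[X]}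
    (hP : P ≠ 0) (hcoeff : ∀ i, |P.coeff i| ≤ 1) (hx : aeval x P = 0) : IsIntegral ℤ x⁻¹ := by
  let := invertibleOfNonzero hx0
  refine isIntegral_of_abs_coeff_le_one (P := P.reverse) (by simpa using hP)
    (fun i => coeff_reverse P i ▸ hcoeff _) ?_
  rw [← invOf_eq_inv]
  exact (eval₂_reverse_eq_zero_iff (algebraMap ℤ K) x P).2 hx

lemma coeff_powSum_X (S : Finset ℕ) (i : ℕ) :
    (powSum (X : ℤ[X]) S).coeff i = if i ∈ S then 1 else 0 := by
  simp [powSum, coeff_X_pow]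

variable {b : ℝ} {k : ℕ}

/- The polynomial expresses the reduction of the difference `1 = b ^ 0 - 0`. -/
lemma SmallDifferencesReduce.exists_abs_coeff_le_one (h : SmallDifferencesReduce b k) :
    ∃ P : ℤ[X], P ≠ 0 ∧ (∀ i, |P.coeff i| ≤ 1) ∧ aeval (b : ℂ) P = 0 := by
  obtain ⟨Q, hQ, R, hR, hQR⟩ := h ∅ {0} (by simp [Admissible]) (by simp [Admissible])
    (by norm_num [powSum])
  have hnot {S : Finset ℕ} (hS : S ⊆ admissibleBelow k) : 4 * k ∉ S := fun hmem =>
    (mem_admissibleBelow.1 (hS hmem)).1.false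
  refine ⟨X ^ (4 * k) - (powSum X Q - powSum X R), fun hzero => ?_, fun i => ?_, ?_⟩
  · simpa [coeff_powSum_X, hnot hQ, hnot hR] using congrArg (coeff · (4 * k)) hzero
  · simp only [coeff_sub, coeff_powSum_X, coeff_X_pow]
    obtain rfl | hi := eq_or_ne i (4 * k)
    · simp [hnot hQ, hnot hR]
    · rw [if_neg hi]
      split_ifs <;> simp
  · have hcast := congrArg Complex.ofRealHom hQR
    simp only [map_sub, map_mul, map_pow, map_powSum, Complex.ofRealHom_eq_coe] at hcast
    simpa [powSum, pow_mul, sub_eq_zero] using hcast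

lemma SmallDifferencesReduce.isIntegral (h : SmallDifferencesReduce b k) :
    IsIntegral ℤ (b : ℂ) :=
  have ⟨_, hP, hcoeff, hb⟩ := h.exists_abs_coeff_le_one
  isIntegral_of_abs_coeff_le_one hP hcoeff hb

lemma SmallDifferencesReduce.isIntegral_inv (h : SmallDifferencesReduce b k) (hb0 : b ≠ 0) :
    IsIntegral ℤ (b : ℂ)⁻¹ :=
  have ⟨_, hP, hcoeff, hb⟩ := h.exists_abs_coeff_le_one
  isIntegral_inv_of_abs_coeff_le_one (by exact_mod_cast hb0) hP hcoeff hb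

end Integrality

section PisotUnits

lemma inv_sub_add_inv_sub_le {x y : ℝ} (hx : x ∈ Set.Ioc 0 1) (hy : y ∈ Set.Ioc 0 1) :
    (x⁻¹ - x) + (y⁻¹ - y) ≤ (x * y)⁻¹ - x * y := by
  obtain ⟨hx0, hx1⟩ := hx
  obtain ⟨hy0, hy1⟩ := hy
  have hdefect : (x * y)⁻¹ - x * y - ((x⁻¹ - x) + (y⁻¹ - y)) =
      (1 - x) * (1 - y) * (1 - x * y) / (x * y) := by
    field_simp
    ring
  have : 0 ≤ (1 - x) * (1 - y) * (1 - x * y) / (x * y) := by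
    have := sub_nonneg.2 hx1
    have := sub_nonneg.2 hy1
    have := sub_nonneg.2 (mul_le_one₀ hx1 hy0.le hy1)
    positivity
  linarith

lemma sum_inv_sub_le {ι : Type*} (s : Finset ι) {r : ι → ℝ} (hr : ∀ i ∈ s, r i ∈ Set.Ioc 0 1) :
    ∑ i ∈ s, ((r i)⁻¹ - r i) ≤ (∏ i ∈ s, r i)⁻¹ - ∏ i ∈ s, r i := by
  classical
  induction s using Finset.induction_on with
  | empty => simp
  | insert a s ha ih =>
    obtain ⟨hra, hrs⟩ := Finset.forall_mem_insert _ _ _ |>.1 hr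
    have hprod : ∏ i ∈ s, r i ∈ Set.Ioc 0 1 :=
      ⟨Finset.prod_pos fun i hi => (hrs i hi).1,
        Finset.prod_le_one (fun i hi => (hrs i hi).1.le) fun i hi => (hrs i hi).2⟩
    rw [Finset.prod_insert ha, Finset.sum_insert ha]
    exact (add_le_add_right (ih hrs) _).trans (inv_sub_add_inv_sub_le hra hprod)

lemma re_sub_inv {w : ℂ} (hw : w ≠ 0) :
    (w - w⁻¹).re = -(w.re / ‖w‖ * (‖w‖⁻¹ - ‖w‖)) := by
  have : ‖w‖ ≠ 0 := norm_ne_zero_iff.2 hw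
  rw [Complex.sub_re, Complex.inv_re, Complex.normSq_eq_norm_sq]
  field_simp
  ring

lemma inv_sub_self_pos {x : ℝ} (hx0 : 0 < x) (hx1 : x < 1) : 0 < x⁻¹ - x :=
  sub_pos.2 (hx1.trans ((one_lt_inv₀ hx0).2 hx1))

lemma abs_re_sub_inv_le {w : ℂ} (hw : w ≠ 0) (hw1 : ‖w‖ < 1) :
    |(w - w⁻¹).re| ≤ ‖w‖⁻¹ - ‖w‖ := by
  have hpos := inv_sub_self_pos (norm_pos_iff.2 hw) hw1
  rw [re_sub_inv hw, abs_neg, abs_mul, abs_of_pos hpos, abs_div, abs_norm]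
  exact mul_le_of_le_one_left hpos.le (div_le_one_of_le₀ (Complex.abs_re_le_norm w) (norm_nonneg w))

lemma re_eq_norm_of_re_sub_inv_eq {w : ℂ} (hw : w ≠ 0) (hw1 : ‖w‖ < 1)
    (h : (w - w⁻¹).re = -(‖w‖⁻¹ - ‖w‖)) : w.re = ‖w‖ := by
  have hpos := inv_sub_self_pos (norm_pos_iff.2 hw) hw1
  rw [re_sub_inv hw, neg_inj, mul_eq_right₀ hpos.ne'] at h
  exact (div_eq_one_iff_eq (norm_ne_zero_iff.2 hw)).1 h

variable {K : Type*} [Field K] [NumberField K] {g : K}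

lemma exists_int_eq_sum_embeddings (hg : IsIntegral ℤ g) :
    ∃ n : ℤ, (n : ℂ) = ∑ σ : K →ₐ[ℚ] ℂ, σ g := by
  obtain ⟨n, hn⟩ := IsIntegrallyClosed.isIntegral_iff.1 (Algebra.isIntegral_trace (L := ℚ) hg)
  exact ⟨n, by simp [← trace_eq_sum_embeddings (K := ℚ) ℂ, ← hn]⟩

lemma exists_int_eq_prod_embeddings (hg : IsIntegral ℤ g) :
    ∃ n : ℤ, (n : ℂ) = ∏ σ : K →ₐ[ℚ] ℂ, σ g := by
  obtain ⟨n, hn⟩ := IsIntegrallyClosed.isIntegral_iff.1 (Algebra.isIntegral_norm ℚ hg)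
  exact ⟨n, by simp [← Algebra.norm_eq_prod_embeddings ℚ ℂ, ← hn]⟩

lemma one_le_prod_norm_embeddings (hg : IsIntegral ℤ g) (hg0 : g ≠ 0) :
    1 ≤ ∏ σ : K →ₐ[ℚ] ℂ, ‖σ g‖ := by
  obtain ⟨n, hn⟩ := exists_int_eq_prod_embeddings hg
  have hn0 : n ≠ 0 := by
    rintro rfl
    simp [eq_comm (a := (0 : ℂ)), Finset.prod_eq_zero_iff, hg0] at hn
  rw [← norm_prod, ← hn, Complex.norm_intCast]
  exact_mod_cast Int.one_le_abs hn0

lemma prod_norm_embeddings_eq_one (hg : IsIntegral ℤ g) (hg' : IsIntegral ℤ g⁻¹) (hg0 : g ≠ 0) :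
    ∏ σ : K →ₐ[ℚ] ℂ, ‖σ g‖ = 1 := by
  refine le_antisymm ?_ (one_le_prod_norm_embeddings hg hg0)
  have hinv := one_le_prod_norm_embeddings hg' (inv_ne_zero hg0)
  simp only [map_inv₀, norm_inv, Finset.prod_inv_distrib] at hinv
  exact (one_le_inv₀ (by simp [Finset.prod_pos, hg0])).1 hinv

variable {σ₀ : K →ₐ[ℚ] ℂ} {b : ℝ}

open Classical in
lemma sum_inv_norm_embedding_sub_le (hg : IsIntegral ℤ g) (hg' : IsIntegral ℤ g⁻¹)
    (hσ₀ : σ₀ g = b) (hb : 0 < b) (hlt : ∀ σ ≠ σ₀, ‖σ g‖ < 1) :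
    ∑ σ ∈ Finset.univ.erase σ₀, (‖σ g‖⁻¹ - ‖σ g‖) ≤ b - b⁻¹ := by
  have hg0 : g ≠ 0 := ne_zero_of_map (f := σ₀) (by rw [hσ₀]; exact_mod_cast hb.ne')
  have hprod : ∏ σ ∈ Finset.univ.erase σ₀, ‖σ g‖ = b⁻¹ := by
    have := prod_norm_embeddings_eq_one hg hg' hg0
    rw [← Finset.mul_prod_erase _ _ (Finset.mem_univ σ₀), hσ₀, Complex.norm_of_nonneg hb.le] at this
    exact eq_inv_of_mul_eq_one_right this
  have hsuper := sum_inv_sub_le (Finset.univ.erase σ₀) (r := fun σ => ‖σ g‖)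
    fun σ h => ⟨by simpa using hg0, (hlt σ (Finset.ne_of_mem_erase h)).le⟩
  rwa [hprod, inv_inv] at hsuper

/- By superadditivity of `r⁻¹ - r` the integer `Tr (g - g⁻¹)` lies in `[0, 1)`, so it vanishes and
every inequality used to bound it below is an equality. -/
lemma re_embedding_eq_norm (hg : IsIntegral ℤ g) (hg' : IsIntegral ℤ g⁻¹) (hσ₀ : σ₀ g = b)
    (hb : 0 < b) (hsmall : b - b⁻¹ < 1 / 2) (hlt : ∀ σ ≠ σ₀, ‖σ g‖ < 1) :
    ∀ σ ≠ σ₀, (σ g).re = ‖σ g‖ := by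
  classical
  have hg0 : g ≠ 0 := ne_zero_of_map (f := σ₀) (by rw [hσ₀]; exact_mod_cast hb.ne')
  have hσ (σ : K →ₐ[ℚ] ℂ) : σ g ≠ 0 := by simpa using hg0
  obtain ⟨T, hT⟩ := exists_int_eq_sum_embeddings (hg.sub hg')
  have hTre : (T : ℝ) = b - b⁻¹ + ∑ σ ∈ Finset.univ.erase σ₀, (σ g - (σ g)⁻¹).re := by
    have := congrArg Complex.re hT
    rw [← Finset.add_sum_erase _ _ (Finset.mem_univ σ₀)] at this
    simpa [hσ₀, ← Complex.ofReal_inv] using this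
  have hbound (σ) (h : σ ∈ Finset.univ.erase σ₀) : |(σ g - (σ g)⁻¹).re| ≤ ‖σ g‖⁻¹ - ‖σ g‖ :=
    abs_re_sub_inv_le (hσ σ) (hlt σ (Finset.ne_of_mem_erase h))
  have hlow := fun σ h => neg_le_of_abs_le (hbound σ h)
  have hsuper := sum_inv_norm_embedding_sub_le hg hg' hσ₀ hb hlt
  have hsumlow := Finset.sum_le_sum hlow
  have hsumup := Finset.sum_le_sum fun σ h => le_of_abs_le (hbound σ h)
  rw [Finset.sum_neg_distrib] at hsumlow
  obtain rfl : T = 0 := by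
    have : |(T : ℝ)| < 1 := abs_lt.2 ⟨by linarith, by linarith⟩
    exact Int.abs_lt_one_iff.1 (by exact_mod_cast this)
  have htermwise := (Finset.sum_eq_sum_iff_of_le hlow).1 <| by
    rw [Finset.sum_neg_distrib]
    push_cast at hTre
    linarith
  intro σ h
  have hmem := Finset.mem_erase.2 ⟨h, Finset.mem_univ σ⟩
  exact re_eq_norm_of_re_sub_inv_eq (hσ σ) (hlt σ h) (htermwise σ hmem).symm

theorem exists_embedding_ne_one_le_norm (hg : IsIntegral ℤ g) (hg' : IsIntegral ℤ g⁻¹)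
    (hσ₀ : σ₀ g = b) (hb : 1 < b) (hsmall : b - b⁻¹ < 1 / 2) : ∃ σ ≠ σ₀, 1 ≤ ‖σ g‖ := by
  classical
  by_contra! hlt
  have hre := re_embedding_eq_norm hg hg' hσ₀ (by linarith) hsmall hlt
  have hb2 : b < 2 := by linarith [inv_lt_one_of_one_lt₀ hb]
  have hg1 : g - 1 ≠ 0 := fun h => by
    rw [sub_eq_zero.1 h, map_one] at hσ₀
    exact hb.ne (by exact_mod_cast hσ₀)
  have hnorm (σ) (h : σ ≠ σ₀) : ‖σ (g - 1)‖ ≤ 1 := by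
    have him : (σ g).im = 0 := Complex.abs_re_eq_norm.1 (by rw [hre σ h, abs_norm])
    have hreal : σ g = (‖σ g‖ : ℂ) := Complex.ext (by simpa using hre σ h) (by simpa using him)
    rw [map_sub, map_one, hreal, ← Complex.ofReal_one, ← Complex.ofReal_sub, Complex.norm_real]
    exact abs_le.2 ⟨by linarith [norm_nonneg (σ g)], by linarith [hlt σ h]⟩
  have hσ₀norm : ‖σ₀ (g - 1)‖ < 1 := by
    rw [map_sub, map_one, hσ₀, ← Complex.ofReal_one, ← Complex.ofReal_sub, Complex.norm_real]
    exact abs_lt.2 ⟨by linarith, by linarith⟩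
  refine (one_le_prod_norm_embeddings (hg.sub isIntegral_one) hg1).not_gt ?_
  rw [← Finset.mul_prod_erase _ _ (Finset.mem_univ σ₀)]
  exact mul_lt_one_of_nonneg_of_lt_one_left (norm_nonneg _) hσ₀norm
    (Finset.prod_le_one (fun _ _ => norm_nonneg _) fun σ h => hnorm σ (Finset.ne_of_mem_erase h))

open IntermediateField in
theorem exists_isConjRoot_one_le_norm (hb : 1 < b) (hsmall : b - b⁻¹ < 1 / 2)
    (hint : IsIntegral ℤ (b : ℂ)) (hint' : IsIntegral ℤ (b : ℂ)⁻¹) :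
    ∃ α : ℂ, IsConjRoot ℚ (b : ℂ) α ∧ α ≠ b ∧ 1 ≤ ‖α‖ := by
  have : FiniteDimensional ℚ ℚ⟮(b : ℂ)⟯ := adjoin.finiteDimensional hint.tower_top
  have : NumberField ℚ⟮(b : ℂ)⟯ := ⟨⟩
  let g := AdjoinSimple.gen ℚ (b : ℂ)
  have hinj := (algebraMap ℚ⟮(b : ℂ)⟯ ℂ).injective
  have hg : IsIntegral ℤ g := (isIntegral_algebraMap_iff hinj).1 hint
  have hg' : IsIntegral ℤ g⁻¹ := (isIntegral_algebraMap_iff hinj).1 (by rwa [map_inv₀])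
  obtain ⟨σ, hσ, hσ1⟩ :=
    exists_embedding_ne_one_le_norm (σ₀ := ℚ⟮(b : ℂ)⟯.val) hg hg' rfl hb hsmall
  refine ⟨σ g, ?_, fun h => hσ (adjoin_algHom_ext ℚ ?_), hσ1⟩
  · exact (minpoly.algHom_eq ℚ⟮(b : ℂ)⟯.val hinj g).trans (minpoly.algHom_eq σ σ.injective g).symm
  · rintro _ rfl
    exact h

end PisotUnits

section Gaps

open Filter

variable {b δ : ℝ}

/- Otherwise `b` would be a Pisot unit, and below `2 ^ (1 / 4)` there is none. -/
theorem exists_powSum_sub_mem_Ioo (hb : 1 < b) (hb4 : b ^ 4 < 2) (hδ : 0 < δ) :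
    ∃ S S', Admissible S ∧ Admissible S' ∧ powSum b S' - powSum b S ∈ Set.Ioo 0 δ := by
  by_contra! hgap
  have hsep : AdmissibleSumsSeparated b δ := by
    rintro _ ⟨S, hS, rfl⟩ _ ⟨S', hS', rfl⟩ hne
    by_contra! hlt
    obtain hpos | hneg := hne.lt_or_gt
    · exact hgap S S' hS hS' ⟨by linarith, by linarith [neg_le_abs (powSum b S - powSum b S')]⟩
    · exact hgap S' S hS' hS ⟨by linarith, by linarith [le_abs_self (powSum b S - powSum b S')]⟩
  obtain ⟨k, hk⟩ := hsep.exists_smallDifferencesReduce hδ hb hb4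
  have hb2 : b ^ 2 < 3 / 2 := by nlinarith [sq_nonneg (b ^ 2)]
  have hsmall : b - b⁻¹ < 1 / 2 := by
    have : b * b⁻¹ = 1 := mul_inv_cancel₀ (by linarith)
    nlinarith
  obtain ⟨α, hα, hαb, hα1⟩ := exists_isConjRoot_one_le_norm hb hsmall hk.isIntegral
    (hk.isIntegral_inv (by linarith))
  exact hα1.not_gt (hk.norm_lt_one_of_isConjRoot hb hb4 hα hαb)

lemma exists_pow_mul_powSum_sub_mem_Ioc (hb : 1 < b) (hb4 : b ^ 4 < 2) (hδ : 0 < δ) (N : ℕ) :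
    ∃ n ≥ N, ∃ S S', Admissible S ∧ Admissible S' ∧
      (b ^ 4) ^ n * (powSum b S' - powSum b S) ∈ Set.Ioc (δ / 2) δ := by
  have hb1 := one_lt_pow_four hb
  have hbN : 1 ≤ (b ^ 4) ^ N := one_le_pow₀ hb1.le
  obtain ⟨S, S', hS, hS', hpos, hlt⟩ :=
    exists_powSum_sub_mem_Ioo hb hb4 (show 0 < δ / (b ^ 4) ^ N by positivity)
  rw [lt_div_comm₀ hpos (by positivity)] at hlt
  obtain ⟨n, hle, hlt'⟩ := exists_nat_pow_near (hbN.trans hlt.le) hb1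
  refine ⟨n, Nat.lt_succ_iff.1 ((pow_lt_pow_iff_right₀ hb1).1 (hlt.trans hlt')), S, S', hS, hS',
    ?_, (le_div_iff₀ hpos).1 hle⟩
  rw [div_lt_iff₀ hpos, pow_succ] at hlt'
  have : 0 < (b ^ 4) ^ n * (powSum b S' - powSum b S) := by positivity
  nlinarith

/- Each step of the induction lengthens the covered interval by `δ / 2`: it adjoins, at high
exponents, one of two sets whose sums differ by an amount in `(δ / 2, δ]`. -/
lemma exists_forall_mem_Ico_add_sub_powSum_mem_Ico (hb : 1 < b) (hb4 : b ^ 4 < 2) (hδ : 0 < δ)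
    (k : ℕ) : ∃ (a : ℝ) (n : ℕ), ∀ s ∈ Set.Ico 0 (δ + k * (δ / 2)),
      ∃ W ⊆ admissibleBelow n, a + s - powSum b W ∈ Set.Ico 0 δ := by
  induction k with
  | zero => exact ⟨0, 0, fun s hs => ⟨∅, by simp, by simpa using hs⟩⟩
  | succ k ih =>
    obtain ⟨a, N, hcover⟩ := ih
    obtain ⟨r, hr, S, S', hS, hS', hlow, hhigh⟩ :=
      exists_pow_mul_powSum_sub_mem_Ioc hb hb4 hδ N
    obtain ⟨n, hn⟩ := (hS.union hS').exists_subset_admissibleBelow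
    obtain ⟨hSn, hSn'⟩ := Finset.union_subset_iff.1 hn
    have hshift (T : Finset ℕ) (hT : T ⊆ admissibleBelow n) (s : ℝ)
        (hs : s ∈ Set.Ico 0 (δ + k * (δ / 2))) : ∃ W ⊆ admissibleBelow (r + n),
          a + (b ^ 4) ^ r * powSum b T + s - powSum b W ∈ Set.Ico 0 δ := by
      obtain ⟨W, hW, hWs⟩ := hcover s hs
      have hWr := hW.trans (admissibleBelow_mono hr)
      refine ⟨_, union_map_add_subset_admissibleBelow hWr hT, ?_⟩
      rw [powSum_union_map_add_of_admissibleBelow b hWr]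
      convert hWs using 1
      ring
    refine ⟨a + (b ^ 4) ^ r * powSum b S, r + n, fun s hs => ?_⟩
    obtain hlt | hge := lt_or_ge s (δ + k * (δ / 2))
    · exact hshift S hSn s ⟨hs.1, hlt⟩
    · have hk : 0 ≤ k * (δ / 2) := by positivity
      have htop := hs.2
      push_cast at htop
      obtain ⟨W, hW, hWs⟩ := hshift S' hSn'
        (s - (b ^ 4) ^ r * (powSum b S' - powSum b S)) ⟨by linarith, by linarith⟩
      refine ⟨W, hW, ?_⟩
      convert hWs using 1
      ring

theorem exists_forall_ge_sub_powSum_mem_Ioo (hb : 1 < b) (hb4 : b ^ 4 < 2) (hδ : 0 < δ) :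
    ∃ K, ∀ x ≥ K, ∃ S, x - powSum b S ∈ Set.Ioo 0 δ := by
  obtain ⟨k, hk⟩ := exists_nat_gt (b ^ 3 / (δ / 2 / 2))
  rw [div_lt_iff₀ (by positivity)] at hk
  obtain ⟨a, n, hcover⟩ :=
    exists_forall_mem_Ico_add_sub_powSum_mem_Ico hb hb4 (half_pos hδ) k
  refine ⟨a + δ / 2, fun x hx => ?_⟩
  obtain ⟨U, hU, hU0, hU3⟩ := exists_mod_eq_sub_powSum_mem_Ico hb hb4.le (j := 3) (by simp)
    (show 0 ≤ x - (a + δ / 2) by linarith)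
  obtain ⟨W, hW, hW0, hWδ⟩ := hcover _ ⟨hU0, by linarith⟩
  have hdisj : Disjoint U W := Finset.disjoint_left.2 fun i hiU hiW =>
    (mem_admissibleBelow.1 (hW hiW)).2 (hU i hiU)
  refine ⟨U ∪ W, ?_⟩
  rw [powSum_union b hdisj]
  exact ⟨by linarith, by linarith⟩

lemma subset_range_of_powSum_lt_pow (hb : 1 < b) {n : ℕ} {S : Finset ℕ}
    (h : powSum b S < b ^ n) : S ⊆ Finset.range n := fun i hi => by
  have hle : b ^ i ≤ powSum b S := Finset.single_le_sum (f := (b ^ ·)) (by intros; positivity) hi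
  exact Finset.mem_range.2 ((pow_lt_pow_iff_right₀ hb).1 (hle.trans_lt h))

theorem eventually_exists_pow_mul_sub_powSum_mem_Ioo (hb : 1 < b) (hb4 : b ^ 4 < 2) (hδ : 0 < δ)
    {x v : ℝ} (hx : x ∈ Set.Ioo 0 1) (hv : 0 ≤ v) :
    ∀ᶠ n in atTop, ∃ S ⊆ Finset.range n, b ^ n * x - powSum b S ∈ Set.Ioo v (v + δ) := by
  obtain ⟨K, hK⟩ := exists_forall_ge_sub_powSum_mem_Ioo hb hb4 hδ
  have htop : Tendsto (fun n => b ^ n * x) atTop atTop :=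
    (tendsto_pow_atTop_atTop_of_one_lt hb).atTop_mul_const hx.1
  filter_upwards [htop.eventually_ge_atTop (K + v)] with n hn
  obtain ⟨S, hS0, hSδ⟩ := hK (b ^ n * x - v) (by linarith)
  have hbn : b ^ n * x < b ^ n := mul_lt_of_lt_one_right (by positivity) hx.2
  exact ⟨S, subset_range_of_powSum_lt_pow hb (by linarith), by linarith, by linarith⟩

end Gaps

section Parallelotope

open Filter Topology

variable {q z : ℂ} {b : ℝ} {m : ℕ}

/-- The combination `∑ j, q ^ (m - 1 - j) * x j`. If `q ^ m = b`, the `m` residue classes of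
positions of an expansion in base `q` contribute expansions `x j` in the real base `b`. -/
noncomputable def layerSum (q : ℂ) (x : Fin m → ℝ) : ℂ := ∑ j, q ^ (j.rev : ℕ) * (x j : ℂ)

/-- The image under `layerSum q` of the open unit cube of dimension `m`. -/
def openParallelotope (q : ℂ) (m : ℕ) : Set ℂ :=
  {z | ∃ x : Fin m → ℝ, (∀ j, x j ∈ Set.Ioo 0 1) ∧ layerSum q x = z}

lemma layerSum_add (q : ℂ) (x y : Fin m → ℝ) :
    layerSum q (x + y) = layerSum q x + layerSum q y := by
  simp [layerSum, mul_add, Finset.sum_add_distrib]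

lemma layerSum_smul (q : ℂ) (c : ℝ) (x : Fin m → ℝ) :
    layerSum q (c • x) = c * layerSum q x := by
  simp [layerSum, Finset.mul_sum, mul_left_comm]

lemma isBounded_openParallelotope (q : ℂ) (m : ℕ) :
    Bornology.IsBounded (openParallelotope q m) := by
  refine isBounded_iff_forall_norm_le.2 ⟨∑ j : Fin m, ‖q ^ (j.rev : ℕ)‖, ?_⟩
  rintro _ ⟨x, hx, rfl⟩
  refine norm_sum_le_of_le _ fun j _ => ?_
  rw [norm_mul, Complex.norm_of_nonneg (hx j).1.le]
  exact mul_le_of_le_one_right (norm_nonneg _) (hx j).2.le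

lemma hasSum_inv_pow_succ (hb : 1 < b) : HasSum (fun a : ℕ => 1 / b ^ (a + 1)) (b - 1)⁻¹ := by
  have hb0 : b ≠ 0 := by linarith
  have hterm (a : ℕ) : 1 / b ^ (a + 1) = b⁻¹ * b⁻¹ ^ a := by
    rw [one_div, ← inv_pow, pow_succ']
  have hvalue : (b - 1)⁻¹ = b⁻¹ * (1 - b⁻¹)⁻¹ := by
    rw [← mul_inv, mul_sub, mul_one, mul_inv_cancel₀ hb0]
  simp only [hterm, hvalue]
  exact (hasSum_geometric_of_lt_one (by positivity) (inv_lt_one_of_one_lt₀ hb)).mul_left b⁻¹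

lemma div_pow_succ_le (hb : 0 < b) {d : ℕ} (hd : d ≤ 1) (a : ℕ) :
    (d : ℝ) / b ^ (a + 1) ≤ 1 / b ^ (a + 1) := by
  gcongr
  exact_mod_cast hd

lemma summable_div_pow_succ (hb : 1 < b) {f : ℕ → ℕ} (hf : ∀ a, f a ≤ 1) :
    Summable fun a => (f a : ℝ) / b ^ (a + 1) :=
  (hasSum_inv_pow_succ hb).summable.of_nonneg_of_le (fun _ => by positivity)
    fun a => div_pow_succ_le (by linarith) (hf a) a

lemma tsum_div_pow_succ_mem_Icc (hb : 1 < b) {f : ℕ → ℕ} (hf : ∀ a, f a ≤ 1) :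
    ∑' a, (f a : ℝ) / b ^ (a + 1) ∈ Set.Icc 0 (b - 1)⁻¹ :=
  ⟨tsum_nonneg fun _ => by positivity, (hasSum_inv_pow_succ hb).tsum_eq ▸
    (summable_div_pow_succ hb hf).tsum_le_tsum (fun a => div_pow_succ_le (by linarith) (hf a) a)
      (hasSum_inv_pow_succ hb).summable⟩

lemma IsExpansionC.eq_layerSum {c : ℕ → ℕ} (hc : IsExpansionC q z c) (hb : 1 < b) [NeZero m]
    (hq : q ^ m = b) :
    z = layerSum q fun j : Fin m => ∑' a : ℕ, (c (a * m + j + 1) : ℝ) / b ^ (a + 1) := by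
  have hq0 : q ≠ 0 := by
    rintro rfl
    rw [zero_pow (NeZero.ne m), eq_comm, Complex.ofReal_eq_zero] at hq
    linarith
  have hterm (j : Fin m) (a : ℕ) : (c (a * m + j + 1) : ℂ) / q ^ (a * m + j + 1) =
      q ^ (j.rev : ℕ) * ((c (a * m + j + 1) / b ^ (a + 1) : ℝ) : ℂ) := by
    have hpow : (b : ℂ) ^ (a + 1) = q ^ (j.rev : ℕ) * q ^ (a * m + j + 1) := by
      rw [← hq, ← pow_mul, ← pow_add, Fin.val_rev]
      congr 1
      have := j.isLt
      rw [mul_add, mul_comm m a]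
      lia
    push_cast
    rw [hpow]
    field_simp
  have hlayer (j : Fin m) : HasSum (fun a : ℕ => (c (a * m + j + 1) : ℂ) / q ^ (a * m + j + 1))
      (q ^ (j.rev : ℕ) * ((∑' a : ℕ, (c (a * m + j + 1) : ℝ) / b ^ (a + 1) : ℝ) : ℂ)) := by
    simp only [hterm]
    exact (Complex.hasSum_ofReal.2
      (summable_div_pow_succ hb fun a => hc.1 (a * m + j + 1)).hasSum).mul_left _
  have hprod := (((Equiv.prodComm _ _).trans (Nat.divModEquiv m).symm).hasSum_iff).2 hc.2
  exact (hprod.prod_fiberwise hlayer).unique (hasSum_fintype _)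

lemma exists_eq_layerSum_of_mem_JC (hb : 1 < b) [NeZero m] (hq : q ^ m = b) (hz : z ∈ JC q) :
    ∃ x : Fin m → ℝ, (∀ j, x j ∈ Set.Icc 0 1) ∧ (b - 1) * z = layerSum q x := by
  obtain ⟨c, hc⟩ := hz
  refine ⟨(b - 1) • fun j : Fin m => ∑' a : ℕ, (c (a * m + j + 1) : ℝ) / b ^ (a + 1),
    fun j => ?_, ?_⟩
  · have hb0 : 0 < b - 1 := sub_pos.2 hb
    obtain ⟨h0, h1⟩ := tsum_div_pow_succ_mem_Icc hb fun a => hc.1 (a * m + j + 1)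
    exact ⟨mul_nonneg hb0.le h0, (le_inv_mul_iff₀ hb0).1 (by simpa using h1)⟩
  · rw [layerSum_smul, ← hc.eq_layerSum hb hq]
    push_cast
    rfl

/- Pushing `z` slightly away from the centre stays in the closed parallelotope, so `z` itself is in
the open one. -/
lemma interior_smul_JC_subset_openParallelotope (hb : 1 < b) [NeZero m] (hq : q ^ m = b) :
    interior ((fun w => ((b : ℂ) - 1) * w) '' JC q) ⊆ openParallelotope q m := by
  intro z hz
  let center : Fin m → ℝ := fun _ => 1 / 2
  have htendsto : Tendsto (fun ε : ℝ => z + ε * (z - layerSum q center)) (𝓝[>] 0) (𝓝 z) := by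
    have hcont : Continuous fun ε : ℝ => z + ε * (z - layerSum q center) := by fun_prop
    simpa using (hcont.tendsto 0).mono_left nhdsWithin_le_nhds
  obtain ⟨ε, ⟨w, hw, hwε : (b - 1) * w = _⟩, hε : 0 < ε⟩ :=
    ((htendsto.eventually (mem_interior_iff_mem_nhds.1 hz)).and self_mem_nhdsWithin).exists
  obtain ⟨x, hx, hxw⟩ := exists_eq_layerSum_of_mem_JC hb hq hw
  refine ⟨(1 + ε)⁻¹ • (x + ε • center), fun j => ?_, ?_⟩
  · obtain ⟨h0, h1⟩ := hx j
    have hj : ((1 + ε)⁻¹ • (x + ε • center)) j = (x j + ε / 2) / (1 + ε) := by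
      simp only [center, Pi.smul_apply, Pi.add_apply, smul_eq_mul]
      ring
    rw [hj, Set.mem_Ioo, div_lt_one (by positivity)]
    exact ⟨by positivity, by linarith⟩
  · have hε1 : (1 + ε : ℂ) ≠ 0 := by exact_mod_cast (by positivity : 1 + ε ≠ 0)
    rw [layerSum_smul, layerSum_add, layerSum_smul, ← hxw, hwε]
    push_cast
    field_simp
    ring

end Parallelotope

section Remainders

variable {q r : ℂ} {b : ℝ} {m : ℕ}

/-- The remainder `q ^ n * (r - ∑_{i < n} L_i / q ^ (i + 1))` of `r` after the digits `L` of length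
`n` have been split off. -/
def remainder (q r : ℂ) (L : List ℕ) : ℂ := L.foldl (fun s (d : ℕ) => q * s - d) r

/-- A word in the alphabet `{0, 1}`. -/
def IsBinary (L : List ℕ) : Prop := ∀ d ∈ L, d ≤ 1

@[simp]
lemma remainder_nil (q r : ℂ) : remainder q r [] = r := rfl

lemma remainder_append (q r : ℂ) (L L' : List ℕ) :
    remainder q r (L ++ L') = remainder q (remainder q r L) L' := List.foldl_append

lemma IsBinary.append {L L' : List ℕ} (hL : IsBinary L) (hL' : IsBinary L') :
    IsBinary (L ++ L') := fun d hd => (List.mem_append.1 hd).elim (hL d) (hL' d)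

lemma IsBinary.replicate_zero (n : ℕ) : IsBinary (List.replicate n 0) := by
  simp +contextual [IsBinary]

lemma remainder_ofFn {n : ℕ} (q r : ℂ) (d : Fin n → ℕ) :
    remainder q r (List.ofFn d) = q ^ n * r - ∑ j, q ^ (j.rev : ℕ) * (d j : ℂ) := by
  induction n generalizing r with
  | zero => simp
  | succ n ih =>
    rw [List.ofFn_succ, ← List.singleton_append, remainder_append, ih, Fin.sum_univ_succ]
    simp only [remainder, List.foldl_cons, List.foldl_nil, Fin.val_rev, Fin.rev_zero, Fin.val_last,
      Fin.rev_succ, Fin.val_castSucc]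
    ring

lemma remainder_layerSum_ofFn (hq : q ^ m = b) (x : Fin m → ℝ) (d : Fin m → ℕ) :
    remainder q (layerSum q x) (List.ofFn d) = layerSum q fun j => b * x j - d j := by
  simp [remainder_ofFn, hq, layerSum, mul_sub, Finset.mul_sum, mul_left_comm]

lemma exists_remainder_layerSum_eq_of_length (hb : 0 ≤ b) (hq : q ^ m = b) {k : ℕ} {L : List ℕ}
    (hL : L.length = m * k) : ∃ v : Fin m → ℝ, (∀ j, 0 ≤ v j) ∧
      ∀ x, remainder q (layerSum q x) L = layerSum q fun j => b ^ k * x j - v j := by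
  induction k generalizing L with
  | zero => exact ⟨0, by simp, by simp [List.length_eq_zero_iff.1 hL]⟩
  | succ k ih =>
    rw [mul_add_one] at hL
    obtain ⟨v, hv, hvx⟩ := ih (L := L.drop m) (by simp [hL])
    obtain ⟨d, hd⟩ : ∃ d : Fin m → ℕ, List.ofFn d = L.take m :=
      ⟨fun j => L[j]'(by lia), List.ext_getElem (by simp [hL]) (by simp)⟩
    refine ⟨fun j => b ^ k * d j + v j, fun j => add_nonneg (by positivity) (hv j), fun x => ?_⟩
    rw [← List.take_append_drop m L, remainder_append, ← hd, remainder_layerSum_ofFn hq, hvx]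
    congr! 2 with j
    ring

lemma exists_remainder_layerSum_eq_sub_powSum (hq : q ^ m = b) (n : ℕ) (x : Fin m → ℝ)
    {S : Fin m → Finset ℕ} (hS : ∀ j, S j ⊆ Finset.range n) :
    ∃ L, IsBinary L ∧
      remainder q (layerSum q x) L = layerSum q fun j => b ^ n * x j - powSum b (S j) := by
  classical
  induction n generalizing x S with
  | zero => exact ⟨[], by simp [IsBinary], by simp_all⟩
  | succ n ih =>
    let d : Fin m → ℕ := fun j => if n ∈ S j then 1 else 0
    obtain ⟨L, hL, hLx⟩ := ih (fun j => b * x j - d j) (S := fun j => (S j).erase n) fun j => by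
      simpa [Finset.range_add_one, Finset.subset_insert_iff] using hS j
    have hpow (j) : powSum b (S j) = b ^ n * d j + powSum b ((S j).erase n) := by
      by_cases hn : n ∈ S j
      · simp [d, hn, powSum]
      · simp [d, hn]
    refine ⟨List.ofFn d ++ L, .append ?_ hL, ?_⟩
    · simp only [IsBinary, List.forall_mem_ofFn_iff]
      exact fun j => ite_le_one le_rfl zero_le_one
    · rw [remainder_append, remainder_layerSum_ofFn hq, hLx]
      congr! 2 with j
      rw [hpow]
      ring

lemma exists_infix_remainder_mem_openParallelotope (hb : 1 < b) (hb4 : b ^ 4 < 2) [NeZero m]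
    (hq : q ^ m = b) (hr : r ∈ openParallelotope q m) {w : List ℕ} (hw : IsBinary w) :
    ∃ L, IsBinary L ∧ w <:+: L ∧ remainder q r L ∈ openParallelotope q m := by
  obtain ⟨x, hx, rfl⟩ := hr
  let k := w.length
  have hbk : 0 < b ^ k := by positivity
  have hk : k ≤ m * k := Nat.le_mul_of_pos_left k (NeZero.pos m)
  let padded := w ++ List.replicate (m * k - k) 0
  obtain ⟨v, hv, hpadded⟩ := exists_remainder_layerSum_eq_of_length (L := padded) (k := k)
    (by linarith) hq (by simp only [padded, k, List.length_append, List.length_replicate]; lia)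
  obtain ⟨n, hn⟩ := (Filter.eventually_all.2 fun j => eventually_exists_pow_mul_sub_powSum_mem_Ioo
    hb hb4 (one_div_pos.2 hbk) (hx j) (div_nonneg (hv j) hbk.le)).exists
  choose S hS hSmem using hn
  obtain ⟨steering, hsteering, hsteered⟩ := exists_remainder_layerSum_eq_sub_powSum hq n x hS
  refine ⟨steering ++ padded, hsteering.append (hw.append (.replicate_zero _)), ?_, ?_⟩
  · exact ⟨steering, List.replicate (m * k - k) 0, by simp [padded]⟩
  · rw [remainder_append, hsteered, hpadded]
    refine ⟨_, fun j => ?_, rfl⟩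
    obtain ⟨hlow, hhigh⟩ := hSmem j
    rw [div_lt_iff₀' hbk] at hlow
    rw [← add_div, lt_div_iff₀' hbk] at hhigh
    exact ⟨by linarith, by linarith⟩

end Remainders

section DigitSequences

open Filter Topology

variable {q z : ℂ} {A : Set ℂ} {f : ℕ → ℕ}

lemma exists_forall_eq_map_range_of_prefix {α : Type*} [Inhabited α] {P : ℕ → List α}
    (hprefix : ∀ k, P k <+: P (k + 1)) (hlength : StrictMono fun k => (P k).length) :
    ∃ f : ℕ → α, ∀ k, P k = (List.range (P k).length).map f := by
  have hmono {k l : ℕ} (hkl : k ≤ l) : P k <+: P l :=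
    Nat.le_induction (List.prefix_refl _) (fun l _ ih => ih.trans (hprefix l)) l hkl
  have hlt (i : ℕ) : i < (P (i + 1)).length := hlength.le_apply (x := i + 1)
  refine ⟨fun i => (P (i + 1))[i]'(hlt i), fun k => List.ext_getElem (by simp) fun i hi _ => ?_⟩
  rw [List.getElem_map, List.getElem_range]
  obtain hle | hle := le_total k (i + 1)
  · exact (hmono hle).getElem hi
  · exact ((hmono hle).getElem (hlt i)).symm

lemma remainder_map_range (hq : q ≠ 0) (z : ℂ) (f : ℕ → ℕ) (n : ℕ) :
    remainder q z ((List.range n).map f) =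
      q ^ n * (z - ∑ i ∈ Finset.range n, (f i : ℂ) / q ^ (i + 1)) := by
  induction n with
  | zero => simp
  | succ n ih =>
    rw [List.range_succ, List.map_append, remainder_append, ih, Finset.sum_range_succ]
    simp only [remainder, List.map_cons, List.map_nil, List.foldl_cons, List.foldl_nil]
    field_simp
    ring

lemma hasSum_div_pow_succ_of_remainder_mem (hq : 1 < ‖q‖) (hf : ∀ i, f i ≤ 1)
    (hA : Bornology.IsBounded A) {n : ℕ → ℕ} (hn : Tendsto n atTop atTop)
    (hmem : ∀ k, remainder q z ((List.range (n k)).map f) ∈ A) :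
    HasSum (fun i => (f i : ℂ) / q ^ (i + 1)) z := by
  have hq0 : q ≠ 0 := norm_pos_iff.1 (by linarith)
  have hsummable : Summable fun i => (f i : ℂ) / q ^ (i + 1) :=
    .of_norm (by simpa using summable_div_pow_succ hq hf)
  obtain ⟨M, hM⟩ := isBounded_iff_forall_norm_le.1 hA
  have hbound (k : ℕ) : ‖∑ i ∈ Finset.range (n k), (f i : ℂ) / q ^ (i + 1) - z‖ ≤
      M * ‖q‖⁻¹ ^ n k := by
    have := hM _ (hmem k)
    rw [remainder_map_range hq0, norm_mul, norm_pow, norm_sub_rev] at this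
    rwa [inv_pow, ← div_eq_mul_inv, le_div_iff₀' (by positivity)]
  have hzero : Tendsto (fun k => M * ‖q‖⁻¹ ^ n k) atTop (𝓝 0) := by
    simpa using ((tendsto_pow_atTop_nhds_zero_of_lt_one (by positivity)
      (inv_lt_one_of_one_lt₀ hq)).comp hn).const_mul M
  have hz : Tendsto (fun k => ∑ i ∈ Finset.range (n k), (f i : ℂ) / q ^ (i + 1)) atTop (𝓝 z) :=
    tendsto_iff_norm_sub_tendsto_zero.2 (squeeze_zero (fun _ => norm_nonneg _) hbound hzero)
  exact hsummable.hasSum_iff.2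
    (tendsto_nhds_unique (hsummable.hasSum.tendsto_sum_nat.comp hn) hz)

lemma universal_of_forall_infix (h : ∀ w, IsBinary w → ∃ n, w <:+: (List.range n).map f) :
    Universal fun i => f (i - 1) := by
  intro w hw
  obtain ⟨n, s, t, hst⟩ := h w hw
  refine ⟨s.length, fun i hi => ?_⟩
  have hlt : s.length + i < n := by
    have := congrArg List.length hst
    simp only [List.length_append, List.length_map, List.length_range] at this
    lia
  have hdigit : w[i] = f (s.length + i) := by
    simpa [List.getElem?_append_right, List.getElem?_append_left hi, hi, hlt] using
      congrArg (·[s.length + i]?) hst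
  rw [List.getD_eq_getElem _ _ hi, hdigit]
  lia

lemma exists_forall_isBinary_mem_range :
    ∃ W : ℕ → List ℕ, (∀ k, IsBinary (W k)) ∧ ∀ w, IsBinary w → ∃ k, W k = w := by
  obtain ⟨W, hW⟩ := (Set.to_countable {w | IsBinary w}).exists_eq_range ⟨[], by simp [IsBinary]⟩
  exact ⟨W, fun k => hW.ge ⟨k, rfl⟩, fun w hw => hW.le hw⟩

lemma exists_chain_remainder_mem
    (hstep : ∀ r ∈ A, ∀ w, IsBinary w → ∃ L, IsBinary L ∧ w <:+: L ∧ remainder q r L ∈ A)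
    (hz : z ∈ A) {W : ℕ → List ℕ} (hW : ∀ k, IsBinary (W k)) :
    ∃ P : ℕ → List ℕ, (∀ k, IsBinary (P k) ∧ remainder q z (P k) ∈ A) ∧
      ∀ k, ∃ L, W k <:+: L ∧ P (k + 1) = P k ++ L := by
  have hextend (k : ℕ) (P : {P // IsBinary P ∧ remainder q z P ∈ A}) :
      ∃ P' : {P // IsBinary P ∧ remainder q z P ∈ A}, ∃ L, W k <:+: L ∧ P'.1 = P.1 ++ L := by
    obtain ⟨P, hP, hPA⟩ := P
    obtain ⟨L, hL, hWL, hLA⟩ := hstep _ hPA (W k) (hW k)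
    exact ⟨⟨P ++ L, hP.append hL, by rwa [remainder_append]⟩, L, hWL, rfl⟩
  choose next hnext using hextend
  let P : ℕ → {P // IsBinary P ∧ remainder q z P ∈ A} :=
    Nat.rec ⟨[], by simp [IsBinary], hz⟩ next
  exact ⟨fun k => (P k).1, fun k => (P k).2, fun k => hnext k (P k)⟩

theorem exists_universal_of_forall_exists_infix_remainder_mem (hq : 1 < ‖q‖)
    (hA : Bornology.IsBounded A)
    (hstep : ∀ r ∈ A, ∀ w, IsBinary w → ∃ L, IsBinary L ∧ w <:+: L ∧ remainder q r L ∈ A)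
    (hz : z ∈ A) : ∃ d, IsExpansionC q z d ∧ Universal d := by
  obtain ⟨W, hW, hWall⟩ := exists_forall_isBinary_mem_range
  -- The extra digit `0` keeps the chain strictly increasing when `W k` is empty.
  obtain ⟨P, hP, hchain⟩ := exists_chain_remainder_mem hstep hz
    fun k => (hW k).append (.replicate_zero 1)
  choose L hWL hPL using hchain
  have hlength : StrictMono fun k => (P k).length := strictMono_nat_of_lt_succ fun k => by
    have := (hWL k).length_le
    simp only [hPL, List.length_append, List.length_replicate] at this ⊢
    lia
  obtain ⟨f, hf⟩ := exists_forall_eq_map_range_of_prefix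
    (fun k => hPL k ▸ List.prefix_append _ _) hlength
  have hf1 (i : ℕ) : f i ≤ 1 := by
    refine (hP (i + 1)).1 _ ?_
    rw [hf, List.mem_map]
    exact ⟨i, List.mem_range.2 (hlength.le_apply (x := i + 1)), rfl⟩
  refine ⟨fun i => f (i - 1), ⟨fun i => hf1 _, ?_⟩, universal_of_forall_infix fun w hw => ?_⟩
  · exact hasSum_div_pow_succ_of_remainder_mem hq hf1 hA hlength.tendsto_atTop
      fun k => hf k ▸ (hP k).2
  · obtain ⟨k, rfl⟩ := hWall w hw
    refine ⟨(P (k + 1)).length, ?_⟩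
    rw [← hf, hPL]
    exact ((List.prefix_append _ _).isInfix.trans (hWL k)).trans (List.suffix_append _ _).isInfix

end DigitSequences

lemma pow_pow_lt_of_lt_rpow {p a : ℝ} {k m : ℕ} (hp : 0 ≤ p) (hkm : k * m ≠ 0) (ha : 0 ≤ a)
    (h : p < a ^ ((1 : ℝ) / (k * m))) : (p ^ m) ^ k < a := by
  rw [← pow_mul, mul_comm, ← Real.rpow_natCast]
  rw [one_div, Real.lt_rpow_inv_iff_of_pos hp ha (by exact_mod_cast Nat.pos_of_ne_zero hkm)] at h
  exact_mod_cast h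

theorem universal_expansion_root_of_unity_base_general (m : ℕ) (b : ℝ) (hb : 1 < b)
    (hb4 : b ^ 4 < 2) (q : ℂ) (hq : q ^ m = b) (z : ℂ)
    (hz : z ∈ interior ((fun w => ((b : ℂ) - 1) * w) '' JC q)) :
    ∃ d : ℕ → ℕ, IsExpansionC q z d ∧ Universal d := by
  have hqb : ‖q‖ ^ m = b := by
    rw [← norm_pow, hq, Complex.norm_of_nonneg (by linarith)]
  have hm : NeZero m := ⟨by rintro rfl; simp_all⟩
  have hq1 : 1 < ‖q‖ := (one_lt_pow_iff_of_nonneg (norm_nonneg q) hm.ne).1 (hqb ▸ hb)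
  exact exists_universal_of_forall_exists_infix_remainder_mem hq1 (isBounded_openParallelotope q m)
    (fun r hr w hw => exists_infix_remainder_mem_openParallelotope hb hb4 hq hr hw)
    (interior_smul_JC_subset_openParallelotope hb hq hz)

theorem universal_expansion_root_of_unity_base (m : ℕ) (hm : 3 ≤ m) (ω : ℂ)
    (hω : ω ^ m = 1) (p : ℝ) (hp1 : 1 < p)
    (hp2 : p < (2 : ℝ) ^ ((1 : ℝ) / (4 * m)))
    (hPisot : ∀ x : ℝ, 1 < x → x ^ 4 = x ^ 3 + 1 → p ^ (2 * m) ≠ x)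
    (q : ℂ) (hq : q = (p : ℂ) * ω) (z : ℂ)
    (hz : z ∈ interior ((fun w => ((p : ℂ) ^ m - 1) * w) '' JC q)) :
    ∃ d : ℕ → ℕ, IsExpansionC q z d ∧ Universal d := by
  have hb4 : (p ^ m) ^ 4 < 2 :=
    pow_pow_lt_of_lt_rpow (by linarith) (by lia) (by norm_num) (by exact_mod_cast hp2)
  exact universal_expansion_root_of_unity_base_general m (p ^ m) (one_lt_pow₀ hp1 (by lia)) hb4 q
    (by simp [hq, mul_pow, hω]) z (by simpa using hz)
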